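/- Let D ⊆ ℝ² be open with coordinates (u,v), and let s₁, t₁, s₂, t₂, p : D → ℝ be smooth functions satisfying the Dirac equations ∂_u t₂ = −p s₁, ∂_v s₁ = p t₂, ∂_u s₂ = p t₁, ∂_v t₁ = −p s₂, with s₁s₂ + t₁t₂ nonvanishing on D. Let φ : D → ℝ³ be smooth with φ_u = (½(s₁² + t₁²), ½(s₁² − t₁²), −s₁t₁) and φ_v = (−½(s₂² + t₂²), ½(s₂² − t₂²), −s₂t₂), and define N := (s₁s₂ + t₁t₂)^{−1}·(s₁t₂ − s₂t₁, s₁t₂ + s₂t₁, s₁s₂ − t₁t₂). Then ⟨N,N⟩ = 1, ⟨N,φ_u⟩ = ⟨N,φ_v⟩ = 0, φ_uv = p·(s₁s₂ + t₁t₂)·N, and hence the mean curvature H := 2e^{−ω}⟨φ_uv,N⟩, where e^{ω/2} := s₁s₂ + t₁t₂, satisfies H = 2p·e^{−ω/2}. -/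

import Mathlib

noncomputable section

/-- The Minkowski bilinear form on `𝔼³₁ = ℝ³`: `⟨a,b⟩ = −a₁b₁ + a₂b₂ + a₃b₃`. -/
def mink (a b : ℝ × ℝ × ℝ) : ℝ := -(a.1 * b.1) + a.2.1 * b.2.1 + a.2.2 * b.2.2

/-- Partial derivative in the first coordinate. -/
def pu {E : Type*} [NormedAddCommGroup E] [NormedSpace ℝ E] (f : ℝ × ℝ → E) (w : ℝ × ℝ) : E :=
  fderiv ℝ f w (1, 0)

/-- Partial derivative in the second coordinate. -/
def pv {E : Type*} [NormedAddCommGroup E] [NormedSpace ℝ E] (f : ℝ × ℝ → E) (w : ℝ × ℝ) : E :=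
  fderiv ℝ f w (0, 1)

/-!
View `ψ = (s₁, t₁)` and `χ = (t₂, -s₂)` as spinors, i.e. `ℝ²` with the area form `ε`. Symmetric
spinor products `a ⊙ b` fill Minkowski 3-space, and the metric is
`⟨a ⊙ b, c ⊙ d⟩ = -(ε(a,c) ε(b,d) + ε(a,d) ε(b,c))`. In these terms `φ_u = ½ ψ ⊙ ψ`,
`φ_v = -½ χ ⊙ χ` and `N = ε(χ,ψ)⁻¹ ψ ⊙ χ`, so that `N` is a unit normal because `ε` is alternating.
The Dirac equations in the direction `v` say `ψ_v = p χ`, whence `φ_uv = ψ ⊙ ψ_v = p ψ ⊙ χ`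
by the Leibniz rule.
-/

section PartialDerivatives

variable {E F : Type*} [NormedAddCommGroup E] [NormedSpace ℝ E]
  [NormedAddCommGroup F] [NormedSpace ℝ F] {w : ℝ × ℝ}

theorem pv_prodMk {f : ℝ × ℝ → E} {g : ℝ × ℝ → F}
    (hf : DifferentiableAt ℝ f w) (hg : DifferentiableAt ℝ g w) :
    pv (fun x ↦ (f x, g x)) w = (pv f w, pv g w) := by
  simp only [pv, hf.fderiv_prodMk hg, ContinuousLinearMap.prod_apply]

theorem pv_congr {f g : ℝ × ℝ → E} (h : f =ᶠ[nhds w] g) : pv f w = pv g w := by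
  simp only [pv, h.fderiv_eq]

theorem pv_const_smul {f : ℝ × ℝ → E} (hf : DifferentiableAt ℝ f w) (r : ℝ) :
    pv (fun x ↦ r • f x) w = r • pv f w := by
  simp only [pv, fderiv_fun_const_smul hf, smul_apply]

theorem pv_bilinear {G : Type*} [NormedAddCommGroup G] [NormedSpace ℝ G] (B : E →L[ℝ] F →L[ℝ] G)
    {f : ℝ × ℝ → E} {g : ℝ × ℝ → F} (hf : DifferentiableAt ℝ f w) (hg : DifferentiableAt ℝ g w) :
    pv (fun x ↦ B (f x) (g x)) w = B (f w) (pv g w) + B (pv f w) (g w) := by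
  rw [pv, B.fderiv_of_bilinear hf hg]
  rfl

end PartialDerivatives

theorem mink_smul_left (r : ℝ) (a b : ℝ × ℝ × ℝ) : mink (r • a) b = r * mink a b := by
  simp only [mink, Prod.smul_fst, Prod.smul_snd, smul_eq_mul]
  ring

theorem mink_smul_right (r : ℝ) (a b : ℝ × ℝ × ℝ) : mink a (r • b) = r * mink a b := by
  simp only [mink, Prod.smul_fst, Prod.smul_snd, smul_eq_mul]
  ring

section Spinors

/-- The area form on the spinor plane `ℝ²`. -/
def spinorArea (a b : ℝ × ℝ) : ℝ := a.1 * b.2 - a.2 * b.1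

/-- The symmetric product of two spinors, an element of Minkowski 3-space. It identifies the
latter with the symmetric square of the spinor plane, and is scaled so that the metric becomes
`mink_spinorProd`. -/
def spinorProd : ℝ × ℝ →L[ℝ] ℝ × ℝ →L[ℝ] ℝ × ℝ × ℝ :=
  (LinearMap.mk₂ ℝ
    (fun a b ↦ (a.1 * b.1 + a.2 * b.2, a.1 * b.1 - a.2 * b.2, -(a.1 * b.2 + a.2 * b.1)))
    (fun a a' b ↦ by ext <;> simp <;> ring) (fun r a b ↦ by ext <;> simp <;> ring)
    (fun a b b' ↦ by ext <;> simp <;> ring)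
    (fun r a b ↦ by ext <;> simp <;> ring)).toContinuousBilinearMap

/-- The unit normal of the plane spanned by the null vectors `spinorProd a a` and
`spinorProd b b`. It is `0` when `a` and `b` are linearly dependent. -/
def spinorNormal (a b : ℝ × ℝ) : ℝ × ℝ × ℝ := (spinorArea b a)⁻¹ • spinorProd a b

variable (a b c d : ℝ × ℝ)

theorem spinorProd_apply :
    spinorProd a b =
      (a.1 * b.1 + a.2 * b.2, a.1 * b.1 - a.2 * b.2, -(a.1 * b.2 + a.2 * b.1)) :=
  rfl

theorem half_smul_spinorProd_mk_self (s t : ℝ) :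
    (1 / 2 : ℝ) • spinorProd (s, t) (s, t) =
      (1 / 2 * (s ^ 2 + t ^ 2), 1 / 2 * (s ^ 2 - t ^ 2), -(s * t)) := by
  simp only [spinorProd_apply, Prod.smul_mk, smul_eq_mul, Prod.mk.injEq]
  refine ⟨?_, ?_, ?_⟩ <;> ring

theorem neg_half_smul_spinorProd_mk_neg_self (s t : ℝ) :
    (-(1 / 2) : ℝ) • spinorProd (t, -s) (t, -s) =
      (-(1 / 2) * (s ^ 2 + t ^ 2), 1 / 2 * (s ^ 2 - t ^ 2), -(s * t)) := by
  simp only [spinorProd_apply, Prod.smul_mk, smul_eq_mul, Prod.mk.injEq]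
  refine ⟨?_, ?_, ?_⟩ <;> ring

theorem spinorArea_mk_neg (s₁ t₁ s₂ t₂ : ℝ) :
    spinorArea (t₂, -s₂) (s₁, t₁) = s₁ * s₂ + t₁ * t₂ := by
  simp only [spinorArea]
  ring

theorem spinorNormal_mk_neg (s₁ t₁ s₂ t₂ : ℝ) :
    spinorNormal (s₁, t₁) (t₂, -s₂) = (s₁ * s₂ + t₁ * t₂)⁻¹ •
      (s₁ * t₂ - s₂ * t₁, s₁ * t₂ + s₂ * t₁, s₁ * s₂ - t₁ * t₂) := by
  rw [spinorNormal, spinorArea_mk_neg, spinorProd_apply]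
  congr 1
  simp only [Prod.mk.injEq]
  refine ⟨?_, ?_, ?_⟩ <;> ring

theorem spinorProd_comm : spinorProd a b = spinorProd b a := by
  simp only [spinorProd_apply, mul_comm, add_comm]

theorem mink_spinorProd :
    mink (spinorProd a b) (spinorProd c d) =
      -(spinorArea a c * spinorArea b d + spinorArea a d * spinorArea b c) := by
  simp only [mink, spinorProd_apply, spinorArea]
  ring

theorem spinorArea_self : spinorArea a a = 0 := by
  simp only [spinorArea, mul_comm, sub_self]

theorem spinorArea_swap : spinorArea a b = -spinorArea b a := by
  simp only [spinorArea]
  ring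

theorem mink_spinorNormal_left : mink (spinorNormal a b) (spinorProd a a) = 0 := by
  simp only [spinorNormal, mink_smul_left, mink_spinorProd, spinorArea_self, zero_mul, add_zero,
    neg_zero, mul_zero]

theorem mink_spinorNormal_right : mink (spinorNormal a b) (spinorProd b b) = 0 := by
  simp only [spinorNormal, mink_smul_left, mink_spinorProd, spinorArea_self, mul_zero, add_zero,
    neg_zero]

variable {a b}

theorem spinorArea_smul_spinorNormal (h : spinorArea b a ≠ 0) :
    spinorArea b a • spinorNormal a b = spinorProd a b :=
  smul_inv_smul₀ h _

theorem mink_spinorNormal_self (h : spinorArea b a ≠ 0) :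
    mink (spinorNormal a b) (spinorNormal a b) = 1 := by
  simp only [spinorNormal, mink_smul_left, mink_smul_right, mink_spinorProd, spinorArea_self,
    spinorArea_swap a b]
  field_simp
  ring

end Spinors

theorem pv_half_smul_spinorProd_self {ψ : ℝ × ℝ → ℝ × ℝ} {w : ℝ × ℝ}
    (hψ : DifferentiableAt ℝ ψ w) :
    pv (fun x ↦ (1 / 2 : ℝ) • spinorProd (ψ x) (ψ x)) w = spinorProd (ψ w) (pv ψ w) := by
  have hprod : DifferentiableAt ℝ (fun x ↦ spinorProd (ψ x) (ψ x)) w :=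
    (spinorProd.hasFDerivAt_of_bilinear hψ.hasFDerivAt hψ.hasFDerivAt).differentiableAt
  rw [pv_const_smul hprod, pv_bilinear spinorProd hψ hψ, spinorProd_comm (pv ψ w)]
  module

theorem pv_pu_eq_smul_spinorNormal {φ : ℝ × ℝ → ℝ × ℝ × ℝ} {ψ : ℝ × ℝ → ℝ × ℝ} {w χ : ℝ × ℝ}
    {p : ℝ} (hψ : DifferentiableAt ℝ ψ w)
    (hφ : pu φ =ᶠ[nhds w] fun x ↦ (1 / 2 : ℝ) • spinorProd (ψ x) (ψ x))
    (hdirac : pv ψ w = p • χ) (h : spinorArea χ (ψ w) ≠ 0) :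
    pv (pu φ) w = (p * spinorArea χ (ψ w)) • spinorNormal (ψ w) χ :=
  calc pv (pu φ) w
      = spinorProd (ψ w) (pv ψ w) := by
        rw [pv_congr hφ, pv_half_smul_spinorProd_self hψ]
    _ = p • spinorProd (ψ w) χ := by rw [hdirac, map_smul]
    _ = (p * spinorArea χ (ψ w)) • spinorNormal (ψ w) χ := by
        rw [mul_smul, spinorArea_smul_spinorNormal h]

theorem mean_curvature_of_eq_smul_unit {x n : ℝ × ℝ × ℝ} {p r : ℝ} (hr : r ≠ 0)
    (hn : mink n n = 1) (hx : x = (p * r) • n) :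
    2 * (r ^ 2)⁻¹ * mink x n = 2 * p * r⁻¹ := by
  rw [hx, mink_smul_left, hn]
  field_simp

theorem weierstrass_mean_curvature_general
    {D : Set (ℝ × ℝ)} (hD : IsOpen D)
    {s₁ t₁ s₂ t₂ p : ℝ × ℝ → ℝ} {φ : ℝ × ℝ → ℝ × ℝ × ℝ}
    (hs₁ : DifferentiableOn ℝ s₁ D) (ht₁ : DifferentiableOn ℝ t₁ D)
    (hs₁v : ∀ w ∈ D, pv s₁ w = p w * t₂ w)
    (ht₁v : ∀ w ∈ D, pv t₁ w = -(p w * s₂ w))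
    (hnz : ∀ w ∈ D, s₁ w * s₂ w + t₁ w * t₂ w ≠ 0)
    (hφu : ∀ w ∈ D, pu φ w =
      (1 / 2 * (s₁ w ^ 2 + t₁ w ^ 2), 1 / 2 * (s₁ w ^ 2 - t₁ w ^ 2), -(s₁ w * t₁ w)))
    (hφv : ∀ w ∈ D, pv φ w =
      (-(1 / 2) * (s₂ w ^ 2 + t₂ w ^ 2), 1 / 2 * (s₂ w ^ 2 - t₂ w ^ 2), -(s₂ w * t₂ w)))
    {N : ℝ × ℝ → ℝ × ℝ × ℝ}
    (hN : ∀ w ∈ D, N w = (s₁ w * s₂ w + t₁ w * t₂ w)⁻¹ •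
      ((s₁ w * t₂ w - s₂ w * t₁ w, s₁ w * t₂ w + s₂ w * t₁ w,
        s₁ w * s₂ w - t₁ w * t₂ w) : ℝ × ℝ × ℝ)) :
    ∀ w ∈ D,
      mink (N w) (N w) = 1 ∧
      mink (N w) (pu φ w) = 0 ∧
      mink (N w) (pv φ w) = 0 ∧
      pv (pu φ) w = (p w * (s₁ w * s₂ w + t₁ w * t₂ w)) • N w ∧
      2 * ((s₁ w * s₂ w + t₁ w * t₂ w) ^ 2)⁻¹ * mink (pv (pu φ) w) (N w)
        = 2 * p w * (s₁ w * s₂ w + t₁ w * t₂ w)⁻¹ := by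
  intro w hw
  let ψ : ℝ × ℝ → ℝ × ℝ := fun x ↦ (s₁ x, t₁ x)
  let χ : ℝ × ℝ := (t₂ w, -s₂ w)
  have hwD : D ∈ nhds w := hD.mem_nhds hw
  have hs₁w := hs₁.differentiableAt hwD
  have ht₁w := ht₁.differentiableAt hwD
  have harea : spinorArea χ (ψ w) = s₁ w * s₂ w + t₁ w * t₂ w := spinorArea_mk_neg ..
  have hu : ∀ x ∈ D, pu φ x = (1 / 2 : ℝ) • spinorProd (ψ x) (ψ x) := fun x hx ↦
    (hφu x hx).trans (half_smul_spinorProd_mk_self ..).symm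
  have hv : pv φ w = (-(1 / 2) : ℝ) • spinorProd χ χ :=
    (hφv w hw).trans (neg_half_smul_spinorProd_mk_neg_self ..).symm
  have hNw : N w = spinorNormal (ψ w) χ := (hN w hw).trans (spinorNormal_mk_neg ..).symm
  have hdirac : pv ψ w = p w • χ := by
    rw [pv_prodMk hs₁w ht₁w, hs₁v w hw, ht₁v w hw, Prod.smul_mk, smul_eq_mul, smul_eq_mul, mul_neg]
  have hχψ : spinorArea χ (ψ w) ≠ 0 := harea ▸ hnz w hw
  have hunit := mink_spinorNormal_self hχψ
  have huv := pv_pu_eq_smul_spinorNormal (hs₁w.prodMk ht₁w)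
    (Filter.eventually_of_mem hwD hu) hdirac hχψ
  rw [← harea, hNw]
  refine ⟨hunit, ?_, ?_, huv, mean_curvature_of_eq_smul_unit hχψ hunit huv⟩
  · rw [hu w hw, mink_smul_right, mink_spinorNormal_left, mul_zero]
  · rw [hv, mink_smul_right, mink_spinorNormal_right, mul_zero]

/-- With `Φ̂` satisfying the Dirac equations with potential `p`, and `φ` having the
Weierstraß derivatives, the vector `N = (s₁s₂+t₁t₂)⁻¹(s₁t₂−s₂t₁, s₁t₂+s₂t₁, s₁s₂−t₁t₂)`
is a unit normal, `φ_uv = p(s₁s₂+t₁t₂)N`, and the mean curvature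
`H = 2e^{−ω}⟨φ_uv,N⟩`, with `e^{ω/2} = s₁s₂+t₁t₂`, equals `2p e^{−ω/2}`. -/
theorem weierstrass_mean_curvature
    (D : Set (ℝ × ℝ)) (hD : IsOpen D)
    (s₁ t₁ s₂ t₂ p : ℝ × ℝ → ℝ) (φ : ℝ × ℝ → ℝ × ℝ × ℝ)
    (hs₁ : ContDiffOn ℝ (⊤ : ℕ∞) s₁ D) (ht₁ : ContDiffOn ℝ (⊤ : ℕ∞) t₁ D)
    (hs₂ : ContDiffOn ℝ (⊤ : ℕ∞) s₂ D) (ht₂ : ContDiffOn ℝ (⊤ : ℕ∞) t₂ D)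
    (hp : ContDiffOn ℝ (⊤ : ℕ∞) p D) (hφ : ContDiffOn ℝ (⊤ : ℕ∞) φ D)
    (hd1 : ∀ w ∈ D, pu t₂ w = -(p w * s₁ w))
    (hd2 : ∀ w ∈ D, pv s₁ w = p w * t₂ w)
    (hd3 : ∀ w ∈ D, pu s₂ w = p w * t₁ w)
    (hd4 : ∀ w ∈ D, pv t₁ w = -(p w * s₂ w))
    (hnz : ∀ w ∈ D, s₁ w * s₂ w + t₁ w * t₂ w ≠ 0)
    (hφu : ∀ w ∈ D, pu φ w =
      (1/2 * (s₁ w^2 + t₁ w^2), 1/2 * (s₁ w^2 - t₁ w^2), -(s₁ w * t₁ w)))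
    (hφv : ∀ w ∈ D, pv φ w =
      (-(1/2) * (s₂ w^2 + t₂ w^2), 1/2 * (s₂ w^2 - t₂ w^2), -(s₂ w * t₂ w)))
    (N : ℝ × ℝ → ℝ × ℝ × ℝ)
    (hN : ∀ w ∈ D, N w = (s₁ w * s₂ w + t₁ w * t₂ w)⁻¹ •
      ((s₁ w * t₂ w - s₂ w * t₁ w, s₁ w * t₂ w + s₂ w * t₁ w,
        s₁ w * s₂ w - t₁ w * t₂ w) : ℝ × ℝ × ℝ)) :
    ∀ w ∈ D,
      mink (N w) (N w) = 1 ∧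
      mink (N w) (pu φ w) = 0 ∧
      mink (N w) (pv φ w) = 0 ∧
      pv (pu φ) w = (p w * (s₁ w * s₂ w + t₁ w * t₂ w)) • N w ∧
      2 * ((s₁ w * s₂ w + t₁ w * t₂ w) ^ 2)⁻¹ * mink (pv (pu φ) w) (N w)
        = 2 * p w * (s₁ w * s₂ w + t₁ w * t₂ w)⁻¹ := by
  exact weierstrass_mean_curvature_general hD (hs₁.differentiableOn (by simp))
    (ht₁.differentiableOn (by simp)) hd2 hd4 hnz hφu hφv hN
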